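/- Assume d + c·(coth(Θ₁k) + coth(Θ₂k))·k ≠ 0 for every integer k ≥ 1, and for such k set λ_k := c² / (d + c·(coth(Θ₁k) + coth(Θ₂k))·k). Then sup_{k ≥ 1} k²·|λ_{k+1} − λ_k| < ∞. -/

import Mathlib

/-!
Since `coth y - 1 = exp (-y) / sinh y` is `O(1/y)`, the denominator `D(x)` of `λ_x`, viewed as a
function of a real variable `x`, is `2 c x + O(1)`. Its increments are therefore bounded while it
grows linearly, and `1 / D(x + h) - 1 / D(x) = (D(x) - D(x + h)) / (D(x + h) D(x))` is `O(1/x²)`.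
-/

open Asymptotics Filter

section Reciprocals

lemma isBigO_inv_sub_inv {α 𝕜 : Type*} [NormedField 𝕜] {l : Filter α} {f g u v : α → 𝕜}
    (hu : ∀ᶠ x in l, u x ≠ 0) (hf : u =O[l] f) (hg : u =O[l] g)
    (hfg : (fun x => g x - f x) =O[l] v) :
    (fun x => (f x)⁻¹ - (g x)⁻¹) =O[l] fun x => v x / u x ^ 2 := by
  have hf_inv : (fun x => (f x)⁻¹) =O[l] fun x => (u x)⁻¹ :=
    hf.inv_rev (hu.mono fun _ hx h => absurd h hx)
  have hg_inv : (fun x => (g x)⁻¹) =O[l] fun x => (u x)⁻¹ :=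
    hg.inv_rev (hu.mono fun _ hx h => absurd h hx)
  refine ((hf_inv.mul hfg).mul hg_inv).congr' ?_ (.of_forall fun x => by ring)
  filter_upwards [hu, hf.eq_zero_imp, hg.eq_zero_imp] with x hux hfx hgx
  exact (inv_sub_inv' (mt hfx hux) (mt hgx hux)).symm

variable {f : ℝ → ℝ} {a : ℝ}

lemma id_isBigO_of_sub_const_mul_isBigO_one (ha : a ≠ 0)
    (hf : (fun x => f x - a * x) =O[atTop] (1 : ℝ → ℝ)) : (fun x => x) =O[atTop] f := by
  have h_linear : (fun x : ℝ => x) =O[atTop] fun x => a * x := isBigO_self_const_mul ha _ _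
  have h_equiv : f ~[atTop] fun x => a * x :=
    hf.trans_isLittleO ((isLittleO_const_id_atTop (1 : ℝ)).trans_isBigO h_linear)
  exact h_linear.trans h_equiv.isBigO_symm

lemma inv_shift_sub_inv_isBigO_of_sub_const_mul_isBigO_one (ha : a ≠ 0)
    (hf : (fun x => f x - a * x) =O[atTop] (1 : ℝ → ℝ)) (h : ℝ) :
    (fun x => (f (x + h))⁻¹ - (f x)⁻¹) =O[atTop] fun x => 1 / x ^ 2 := by
  have h_shift : Tendsto (fun x : ℝ => x + h) atTop atTop :=
    tendsto_atTop_add_const_right _ h tendsto_id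
  have h_id_le : (fun x => x) =O[atTop] f := id_isBigO_of_sub_const_mul_isBigO_one ha hf
  have hf_shift : (fun x => f (x + h) - a * (x + h)) =O[atTop] (1 : ℝ → ℝ) :=
    hf.comp_tendsto h_shift
  have h_id_le_shift : (fun x => x) =O[atTop] fun x => f (x + h) := by
    refine id_isBigO_of_sub_const_mul_isBigO_one ha ?_
    exact (hf_shift.add (isBigO_const_const (a * h) one_ne_zero _)).congr_left fun x => by ring
  have h_increment : (fun x => f x - f (x + h)) =O[atTop] (1 : ℝ → ℝ) :=
    ((hf.sub hf_shift).add (isBigO_const_const (-(a * h)) one_ne_zero _)).congr_left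
      fun x => by ring
  exact isBigO_inv_sub_inv (eventually_ne_atTop 0) h_id_le_shift h_id_le h_increment

end Reciprocals

lemma exists_forall_pow_mul_norm_le_of_isBigO {E : Type*} [NormedAddCommGroup E] {u : ℕ → E} {p : ℕ}
    (hu : u =O[atTop] fun k => 1 / (k : ℝ) ^ p) :
    ∃ M : ℝ, ∀ k : ℕ, 1 ≤ k → (k : ℝ) ^ p * ‖u k‖ ≤ M := by
  obtain ⟨M, -, hM⟩ := bound_of_isBigO_nat_atTop hu
  refine ⟨M, fun k hk => ?_⟩
  have h_pow_pos : (0 : ℝ) < (k : ℝ) ^ p := by positivity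
  have h_bound : ‖u k‖ ≤ M * (1 / (k : ℝ) ^ p) := by
    simpa only [Real.norm_of_nonneg (one_div_pos.mpr h_pow_pos).le]
      using hM (one_div_pos.mpr h_pow_pos).ne'
  rwa [mul_one_div, le_div_iff₀' h_pow_pos] at h_bound

/-- The hyperbolic cotangent, with the junk value `0` at `0`. -/
noncomputable def coth (x : ℝ) : ℝ := Real.cosh x / Real.sinh x

lemma coth_sub_one_eq {x : ℝ} (hx : x ≠ 0) : coth x - 1 = Real.exp (-x) / Real.sinh x := by
  rw [coth, div_sub_one (Real.sinh_ne_zero.mpr hx), Real.cosh_sub_sinh]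

lemma coth_sub_one_isBigO_inv : (fun x => coth x - 1) =O[atTop] fun x => x⁻¹ := by
  refine .of_bound' ?_
  filter_upwards [eventually_gt_atTop 0] with x hx
  have h_sinh : x < Real.sinh x := Real.self_lt_sinh_iff.mpr hx
  have h_exp : Real.exp (-x) ≤ 1 := Real.exp_le_one_iff.mpr (neg_nonpos.mpr hx.le)
  have h_sinh_pos : 0 < Real.sinh x := hx.trans h_sinh
  rw [coth_sub_one_eq hx.ne', Real.norm_of_nonneg (div_nonneg (Real.exp_pos _).le h_sinh_pos.le),
    Real.norm_of_nonneg (inv_pos.mpr hx).le, ← one_div]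
  gcongr

lemma coth_mul_sub_one_mul_isBigO_one {Θ : ℝ} (hΘ : 0 < Θ) :
    (fun x => (coth (Θ * x) - 1) * x) =O[atTop] (1 : ℝ → ℝ) := by
  have h_coth : (fun x => coth (Θ * x) - 1) =O[atTop] fun x => (Θ * x)⁻¹ :=
    coth_sub_one_isBigO_inv.comp_tendsto (tendsto_id.const_mul_atTop hΘ)
  refine (h_coth.mul (isBigO_refl (fun x => x) _)).trans
    ((isBigO_const_const Θ⁻¹ one_ne_zero _).congr' ?_ .rfl)
  filter_upwards [eventually_ne_atTop 0] with x hx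
  field_simp

/-- The denominator `d + c (coth (Θ₁ x) + coth (Θ₂ x)) x` of `λ_x`, for a real index `x`. -/
noncomputable def cothDenom (c d Θ₁ Θ₂ x : ℝ) : ℝ :=
  d + c * (coth (Θ₁ * x) + coth (Θ₂ * x)) * x

lemma cothDenom_sub_isBigO_one (c d : ℝ) {Θ₁ Θ₂ : ℝ} (hΘ₁ : 0 < Θ₁) (hΘ₂ : 0 < Θ₂) :
    (fun x => cothDenom c d Θ₁ Θ₂ x - 2 * c * x) =O[atTop] (1 : ℝ → ℝ) := by
  have h_coth := (coth_mul_sub_one_mul_isBigO_one hΘ₁).add (coth_mul_sub_one_mul_isBigO_one hΘ₂)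
  refine ((isBigO_const_const d one_ne_zero _).add (h_coth.const_mul_left c)).congr_left fun x => ?_
  rw [cothDenom]
  ring

theorem stmt_16_general {c Θ₁ Θ₂ : ℝ} (hc : c ≠ 0) (d : ℝ) (hΘ₁ : 0 < Θ₁) (hΘ₂ : 0 < Θ₂) (h : ℝ) :
    (fun x => c ^ 2 / cothDenom c d Θ₁ Θ₂ (x + h) - c ^ 2 / cothDenom c d Θ₁ Θ₂ x)
      =O[atTop] fun x => 1 / x ^ 2 := by
  have h_inv := inv_shift_sub_inv_isBigO_of_sub_const_mul_isBigO_one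
    (mul_ne_zero two_ne_zero hc) (cothDenom_sub_isBigO_one c d hΘ₁ hΘ₂) h
  exact (h_inv.const_mul_left (c ^ 2)).congr_left fun x => by ring

/-- With `λ_k := c² / (d + c(coth(Θ₁k)+coth(Θ₂k))k)` (defined whenever the
denominator does not vanish for integers `k ≥ 1`), one has
`sup_{k ≥ 1} k²·|λ_{k+1} − λ_k| < ∞`. -/
theorem stmt_16 (c d Θ₁ Θ₂ : ℝ) (hc : 0 < c) (hΘ₁ : 0 < Θ₁) (hΘ₂ : 0 < Θ₂)
    (hden : ∀ k : ℕ, 1 ≤ k →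
      d + c * (Real.cosh (Θ₁ * k) / Real.sinh (Θ₁ * k)
        + Real.cosh (Θ₂ * k) / Real.sinh (Θ₂ * k)) * k ≠ 0) :
    ∃ M : ℝ, ∀ k : ℕ, 1 ≤ k →
      (k : ℝ) ^ 2 *
        |c ^ 2 / (d + c * (Real.cosh (Θ₁ * (k + 1)) / Real.sinh (Θ₁ * (k + 1))
            + Real.cosh (Θ₂ * (k + 1)) / Real.sinh (Θ₂ * (k + 1))) * (k + 1))
          - c ^ 2 / (d + c * (Real.cosh (Θ₁ * k) / Real.sinh (Θ₁ * k)
            + Real.cosh (Θ₂ * k) / Real.sinh (Θ₂ * k)) * k)| ≤ M :=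
  exists_forall_pow_mul_norm_le_of_isBigO <|
    (stmt_16_general hc.ne' d hΘ₁ hΘ₂ 1).comp_tendsto tendsto_natCast_atTop_atTop
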